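/- arXiv:2102.11072 — 4 statements merged into one kernel-verified Lean document; each statement's English description precedes it below -/
import Mathlib

section
/- Let n ≥ 1 be a natural number, let ε > 0, and for each i ∈ {1,…,n} let a_i < b_i be real bounds. Let σ_i = n(b_i − a_i)/ε. Then for all vectors X₁, X₂, R ∈ ℝⁿ, the product of Laplace densities satisfies ∏_{i=1}^n f_{σ_i}(R_i − X₁ᵢ) ≤ exp(ε · d(X₁, X₂)) · ∏_{i=1}^n f_{σ_i}(R_i − X₂ᵢ). (This is the pointwise-density form of the paper's Theorem 1: adding independent Laplace noise with scale σ_i = n(b_i − a_i)/ε to each coordinate yields ε-differential privacy with respect to the normalized distance d.) -/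
open Real Finset

/-- pointwise-density form of the paper's Theorem 1.
For `n ≥ 1`, `ε > 0`, bounds `a i < b i` and Laplace scales
`σ i = n * (b i - a i) / ε`, for all vectors `X₁ X₂ R : Fin n → ℝ`,
the product of Laplace densities satisfies
`∏ i, f_{σ i} (R i - X₁ i) ≤ exp (ε * d X₁ X₂) * ∏ i, f_{σ i} (R i - X₂ i)`,
where `d X Y = (∑ i, |X i - Y i| / (b i - a i)) / n`. -/
theorem laplace_mechanism_pointwise_density_dp
    (n : ℕ) (hn : 1 ≤ n) (ε : ℝ) (hε : 0 < ε)
    (a b : Fin n → ℝ) (hab : ∀ i, a i < b i)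
    (σ : Fin n → ℝ) (hσ : ∀ i, σ i = n * (b i - a i) / ε)
    (X₁ X₂ R : Fin n → ℝ) :
    (∏ i, Real.exp (-|R i - X₁ i| / σ i) / (2 * σ i)) ≤
      Real.exp (ε * ((∑ i, |X₁ i - X₂ i| / (b i - a i)) / n)) *
        ∏ i, Real.exp (-|R i - X₂ i| / σ i) / (2 * σ i) := by
  have hn0 : (0 : ℝ) < n := by exact_mod_cast hn
  have hpos : ∀ i, 0 < σ i := fun i => by
    rw [hσ i]
    exact div_pos (mul_pos hn0 (sub_pos.mpr (hab i))) hε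
  have hsum : ε * ((∑ i, |X₁ i - X₂ i| / (b i - a i)) / n) = ∑ i, |X₁ i - X₂ i| / σ i := by
    rw [Finset.sum_div, Finset.mul_sum]
    refine Finset.sum_congr rfl fun i _ => ?_
    have hb : b i - a i ≠ 0 := (sub_pos.mpr (hab i)).ne'
    rw [hσ i]
    field_simp
  rw [hsum, Real.exp_sum, ← Finset.prod_mul_distrib]
  refine Finset.prod_le_prod (fun i _ => ?_) (fun i _ => ?_)
  · have := hpos i
    positivity
  · have h := hpos i
    rw [← mul_div_assoc, ← Real.exp_add, ← add_div]
    have key : -|R i - X₁ i| ≤ |X₁ i - X₂ i| + -|R i - X₂ i| := by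
      have := abs_sub_le (R i) (X₁ i) (X₂ i)
      linarith
    gcongr
end

section
/- Let n ≥ 1 be a natural number, let ε > 0, and for each i ∈ {1,…,n} let a_i < b_i be real bounds, and set σ_i = n(b_i − a_i)/ε. Then for all X₁, X₂ ∈ ℝⁿ and every Lebesgue-measurable set S ⊆ ℝⁿ, ∫_S ∏_{i=1}^n f_{σ_i}(R_i − X₁ᵢ) dR ≤ exp(ε · d(X₁, X₂)) · ∫_S ∏_{i=1}^n f_{σ_i}(R_i − X₂ᵢ) dR. (Measure-theoretic form of the paper's Theorem 1: the probability that the Laplace mechanism applied to X₁ outputs a value in S is at most exp(ε · d(X₁, X₂)) times the probability that it does so for X₂.) -/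
open Real Finset MeasureTheory

theorem laplace_integrable_aux (s : ℝ) (hs : 0 < s) :
    Integrable (fun x : ℝ => Real.exp (-|x| / s)) := by
  by_contra hcon
  have h0 := integral_undef hcon
  rw [integral_comp_abs (f := fun x : ℝ => Real.exp (-x / s))] at h0
  have h1 : ∀ x : ℝ, Real.exp (-x / s) = Real.exp ((-s⁻¹) * x) := by
    intro x
    congr 1
    ring
  simp only [h1] at h0
  rw [integral_exp_mul_Ioi (neg_lt_zero.2 (inv_pos.2 hs)) 0] at h0
  simp at h0
  exact hs.ne' h0

/-- measure-theoretic form of the paper's Theorem 1.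
With Laplace scales `σ i = n * (b i - a i) / ε`, for all `X₁ X₂ : Fin n → ℝ`
and every Lebesgue-measurable set `S ⊆ ℝⁿ`, the probability that the Laplace
mechanism applied to `X₁` outputs a value in `S` is at most
`exp (ε * d X₁ X₂)` times the probability that it does so for `X₂`. -/
theorem laplace_mechanism_measure_dp
    (n : ℕ) (hn : 1 ≤ n) (ε : ℝ) (hε : 0 < ε)
    (a b : Fin n → ℝ) (hab : ∀ i, a i < b i)
    (σ : Fin n → ℝ) (hσ : ∀ i, σ i = n * (b i - a i) / ε)
    (X₁ X₂ : Fin n → ℝ) (S : Set (Fin n → ℝ)) (hS : MeasurableSet S) :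
    (∫ R in S, ∏ i, Real.exp (-|R i - X₁ i| / σ i) / (2 * σ i)) ≤
      Real.exp (ε * ((∑ i, |X₁ i - X₂ i| / (b i - a i)) / n)) *
        ∫ R in S, ∏ i, Real.exp (-|R i - X₂ i| / σ i) / (2 * σ i) := by
  have hnpos : (0:ℝ) < n := by exact_mod_cast hn
  have hσpos : ∀ i, 0 < σ i := by
    intro i
    rw [hσ i]
    have := sub_pos.2 (hab i)
    positivity
  have hint : Integrable
      (fun R : Fin n → ℝ => ∏ i, Real.exp (-|R i - X₂ i| / σ i) / (2 * σ i)) := by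
    refine Integrable.fintype_prod
      (f := fun i (x : ℝ) => Real.exp (-|x - X₂ i| / σ i) / (2 * σ i)) ?_
    intro i
    exact ((laplace_integrable_aux (σ i) (hσpos i)).comp_sub_right (X₂ i)).div_const _
  rw [← integral_const_mul]
  refine integral_mono_of_nonneg ?_ (hint.integrableOn.const_mul _) ?_
  · refine Filter.Eventually.of_forall fun R => ?_
    exact Finset.prod_nonneg fun i _ => by have := hσpos i; positivity
  · refine Filter.Eventually.of_forall fun R => ?_
    have hsum : ε * ((∑ i, |X₁ i - X₂ i| / (b i - a i)) / n)
        = ∑ i, |X₁ i - X₂ i| / σ i := by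
      rw [Finset.sum_div, Finset.mul_sum]
      refine Finset.sum_congr rfl fun i _ => ?_
      rw [hσ i]
      have := (sub_pos.2 (hab i)).ne'
      field_simp
    simp only []
    rw [hsum, Real.exp_sum, ← Finset.prod_mul_distrib]
    refine Finset.prod_le_prod (fun i _ => by have := hσpos i; positivity) fun i _ => ?_
    have hi := hσpos i
    rw [← mul_div_assoc, ← Real.exp_add, ← add_div]
    gcongr
    have h := abs_sub_le (R i) (X₁ i) (X₂ i)
    linarith
end

section
/- Let n ≥ 1 be a natural number and for each i ∈ {1,…,n} let a_i < b_i be real bounds. If X₁, X₂ ∈ ℝⁿ satisfy a_i ≤ X₁ᵢ ≤ b_i and a_i ≤ X₂ᵢ ≤ b_i for every i, then 0 ≤ d(X₁, X₂) ≤ 1. Consequently, for every ε > 0, with σ_i = n(b_i − a_i)/ε, the multiplicative bound between any pair of in-range secrets is at most e^ε: for all R ∈ ℝⁿ, ∏_{i=1}^n f_{σ_i}(R_i − X₁ᵢ) ≤ e^ε · ∏_{i=1}^n f_{σ_i}(R_i − X₂ᵢ). -/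
open Real Finset

/-- the normalized distance between in-range secrets lies in
`[0,1]`, and consequently, for every `ε > 0`, with scales
`σ i = n * (b i - a i) / ε`, the multiplicative bound between any pair of
in-range secrets is at most `e^ε`. -/
theorem distance_range_and_eps_bound
    (n : ℕ) (hn : 1 ≤ n) (a b : Fin n → ℝ) (hab : ∀ i, a i < b i)
    (X₁ X₂ : Fin n → ℝ)
    (hX₁ : ∀ i, a i ≤ X₁ i ∧ X₁ i ≤ b i)
    (hX₂ : ∀ i, a i ≤ X₂ i ∧ X₂ i ≤ b i) :
    (0 ≤ (∑ i, |X₁ i - X₂ i| / (b i - a i)) / n ∧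
      (∑ i, |X₁ i - X₂ i| / (b i - a i)) / n ≤ 1) ∧
    ∀ ε : ℝ, 0 < ε → ∀ R : Fin n → ℝ,
      (∏ i, Real.exp (-|R i - X₁ i| / (n * (b i - a i) / ε)) /
          (2 * (n * (b i - a i) / ε))) ≤
        Real.exp ε *
          ∏ i, Real.exp (-|R i - X₂ i| / (n * (b i - a i) / ε)) /
            (2 * (n * (b i - a i) / ε)) := by
  have hn' : (0 : ℝ) < n := by exact_mod_cast hn
  have hd : ∀ i, |X₁ i - X₂ i| ≤ b i - a i := fun i => by
    have h1 := hX₁ i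
    have h2 := hX₂ i
    rw [abs_le]
    constructor <;> linarith
  refine ⟨⟨?_, ?_⟩, ?_⟩
  · exact div_nonneg (Finset.sum_nonneg fun i _ =>
      div_nonneg (abs_nonneg _) (sub_pos.2 (hab i)).le) hn'.le
  · rw [div_le_one hn']
    calc (∑ i, |X₁ i - X₂ i| / (b i - a i)) ≤ ∑ _i : Fin n, (1 : ℝ) :=
          Finset.sum_le_sum fun i _ => (div_le_one (sub_pos.2 (hab i))).2 (hd i)
      _ = n := by simp
  · intro ε hε R
    have he : Real.exp ε = ∏ _i : Fin n, Real.exp (ε / n) := by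
      rw [Finset.prod_const, Finset.card_univ, Fintype.card_fin, ← Real.exp_nat_mul]
      congr 1
      field_simp
    rw [he, ← Finset.prod_mul_distrib]
    refine Finset.prod_le_prod (fun i _ => ?_) (fun i _ => ?_)
    · have := sub_pos.2 (hab i)
      positivity
    · have hw := sub_pos.2 (hab i)
      have hs : 0 < (n : ℝ) * (b i - a i) / ε := by positivity
      rw [← mul_div_assoc (Real.exp (ε / n)), ← Real.exp_add]
      refine div_le_div_of_nonneg_right (Real.exp_le_exp.2 ?_) (by positivity)
      have h1 : ε / n = (b i - a i) / ((n : ℝ) * (b i - a i) / ε) := by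
        field_simp
      rw [h1, ← add_div]
      refine div_le_div_of_nonneg_right ?_ hs.le
      have h2 := abs_sub_le (R i) (X₁ i) (X₂ i)
      linarith [hd i]
end

section
/- Let n ≥ 1, ε > 0, and for each i ∈ {1,…,n} let a_i < b_i be real bounds, with σ_i = n(b_i − a_i)/ε. Define the clamping map g : ℝⁿ → ℝⁿ by g(R)_i = max(a_i, min(b_i, R_i)). Then for all X₁, X₂ ∈ ℝⁿ and every measurable set S ⊆ ℝⁿ, the clamped Laplace mechanism satisfies ∫_{g⁻¹(S)} ∏_{i=1}^n f_{σ_i}(R_i − X₁ᵢ) dR ≤ exp(ε · d(X₁, X₂)) · ∫_{g⁻¹(S)} ∏_{i=1}^n f_{σ_i}(R_i − X₂ᵢ) dR. (This is the paper's claim that snapping each out-of-bounds noisy coordinate back to the nearest valid value in [a_i, b_i] preserves the ε-differential-privacy guarantee of Theorem 1.) -/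
open Real Finset MeasureTheory

lemma aux_integrable (s c : ℝ) (hs : 0 < s) :
    Integrable (fun x : ℝ => Real.exp (-|x - c| / s) / (2 * s)) := by
  have h0 : Integrable (fun x : ℝ => Real.exp (-|x| / s)) := by
    have h1 : IntegrableOn (fun x : ℝ => Real.exp (-|x| / s)) (Set.Ioi 0) := by
      refine (integrableOn_exp_mul_Ioi (a := -(1 / s)) (by simpa using hs) 0).congr_fun ?_
        measurableSet_Ioi
      intro x hx
      have hx' : (0 : ℝ) < x := hx
      simp only [abs_of_pos hx']
      congr 1
      ring
    have h2 : IntegrableOn (fun x : ℝ => Real.exp (-|x| / s)) (Set.Iic 0) := by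
      refine (integrableOn_exp_mul_Iic (a := 1 / s) (by positivity) 0).congr_fun ?_
        measurableSet_Iic
      intro x hx
      have hx' : x ≤ 0 := hx
      simp only [abs_of_nonpos hx']
      congr 1
      ring
    rw [← integrableOn_univ, ← Set.Iic_union_Ioi (a := (0 : ℝ))]
    exact h2.union h1
  exact (h0.comp_sub_right c).div_const _

/-- the clamped Laplace mechanism preserves the
`ε`-differential-privacy guarantee of Theorem 1. With Laplace scales
`σ i = n * (b i - a i) / ε` and the clamping map
`g R i = max (a i) (min (b i) (R i))`, for all `X₁ X₂` and every measurable
set `S`, the probability (integral of the density over `g ⁻¹' S`) under `X₁`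
is at most `exp (ε * d X₁ X₂)` times that under `X₂`. -/
theorem clamped_laplace_mechanism_dp
    (n : ℕ) (hn : 1 ≤ n) (ε : ℝ) (hε : 0 < ε)
    (a b : Fin n → ℝ) (hab : ∀ i, a i < b i)
    (σ : Fin n → ℝ) (hσ : ∀ i, σ i = n * (b i - a i) / ε)
    (g : (Fin n → ℝ) → (Fin n → ℝ))
    (hg : ∀ (R : Fin n → ℝ) (i : Fin n), g R i = max (a i) (min (b i) (R i)))
    (X₁ X₂ : Fin n → ℝ) (S : Set (Fin n → ℝ)) (hS : MeasurableSet S) :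
    (∫ R in g ⁻¹' S, ∏ i, Real.exp (-|R i - X₁ i| / σ i) / (2 * σ i)) ≤
      Real.exp (ε * ((∑ i, |X₁ i - X₂ i| / (b i - a i)) / n)) *
        ∫ R in g ⁻¹' S, ∏ i, Real.exp (-|R i - X₂ i| / σ i) / (2 * σ i) := by
  have hn' : (0 : ℝ) < n := by exact_mod_cast hn
  have hpos : ∀ i, 0 < σ i := by
    intro i
    rw [hσ]
    have := sub_pos.2 (hab i)
    positivity
  rw [← integral_const_mul]
  have hint : Integrable (fun R : Fin n → ℝ =>
      ∏ i, Real.exp (-|R i - X₂ i| / σ i) / (2 * σ i)) :=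
    Integrable.fintype_prod (fun i => aux_integrable (σ i) (X₂ i) (hpos i))
  refine integral_mono_of_nonneg ?_ (hint.integrableOn.const_mul _) ?_
  · refine Filter.Eventually.of_forall fun R => ?_
    refine Finset.prod_nonneg fun i _ => ?_
    have := hpos i
    positivity
  · refine Filter.Eventually.of_forall fun R => ?_
    have he : ε * ((∑ i, |X₁ i - X₂ i| / (b i - a i)) / n) = ∑ i, |X₁ i - X₂ i| / σ i := by
      rw [Finset.sum_div, Finset.mul_sum]
      refine Finset.sum_congr rfl fun i _ => ?_
      have := sub_pos.2 (hab i)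
      rw [hσ]
      field_simp
    simp only []
    rw [he, Real.exp_sum, ← Finset.prod_mul_distrib]
    refine Finset.prod_le_prod (fun i _ => ?_) (fun i _ => ?_)
    · have := hpos i
      positivity
    · have h := hpos i
      rw [← mul_div_assoc, ← Real.exp_add, ← add_div]
      have h3 := abs_sub_le (R i) (X₁ i) (X₂ i)
      gcongr
      linarith
end
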